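/- arXiv:math/0503246 — 2 statements merged into one kernel-verified Lean document; each statement's English description precedes it below -/
import Mathlib

section
/- Let χ be a real measurable function with χ(t) = 1 for 0 ≤ t ≤ 1 and 0 ≤ χ(t) ≤ 1 for t > 1. Assume either: (i) there exists T > 1 with ∫_T^∞ χ(t) dt = 0, where T is minimal with this property; or (ii) there exist a function ε(t) → 0 as t → ∞ and a nondecreasing function h with h(t) → ∞ as t → ∞ such that χ(t) = ((1+ε(t))/h(t))^t for all t ≥ 1. Let σ be the unique solution of u·σ(u) = ∫₀^u σ(u−t)·χ(t) dt for u > 1 with σ(u) = 1 for 0 ≤ u ≤ 1, and for u > 1 let ξ(u) be the unique solution of u = ∫₁^∞ χ(v)·e^{ξ(u)·v} dv. Then (log σ(u) + ξ(u)·u − ∫₁^∞ (χ(v)·e^{ξ(u)·v}/v) dv)/u → 0 as u → ∞. -/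
/-!
Write `E` for the Legendre-type exponent `ξ(u) u - ∫₁^∞ χ(v) e^{ξ(u) v} / v dv`. Gronwall applied
to negative parts gives a comparison principle: supersolutions of the delay equation lie above `σ`,
subsolutions below. By convexity of `exp`, the slope of `E` between `x` and `u` is at most `ξ(u)`
and at least `ξ(x)`. Hence the convolution of `e^{-E}` with `χ` at `u` is at most
`e^{-E(u)} ∫₀ᵘ χ(t) e^{ξ(u) t} dt`, whose part over `t > 1` is at most `u e^{-E(u)}` by the saddle
point equation. Tilting the exponent to `E(u) - δ u` gains a factor `e^{-δ}` there, which pays for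
the part over `[0, 1]` since `e^{ξ(u)} = o(u)`; this is the upper bound.

For the lower bound the exponent is tilted to `E(u) + 3 η u`, and only shifts `t ≤ η u` are kept:
there `ξ(u) - ξ(u - t) ≤ 2 η`, so it suffices that the saddle point integral, tilted by `η`, still
has mass `u` on this range. When `χ(t)` is essentially `g(t)^t` with `g` decreasing to `0`, compare
`g(X)` at the cutoff `X` with `e^{-ξ(u)}`: if it is larger, the last unit interval below the cutoff
has exponentially large mass; if not, the tail beyond the cutoff is bounded.
-/

open MeasureTheory Set Filter Topology Asymptotics Real

theorem intervalIntegrable_subinterval {f : ℝ → ℝ} {a b c d : ℝ}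
    (hf : IntervalIntegrable f volume a b) (hac : a ≤ c) (hcd : c ≤ d) (hdb : d ≤ b) :
    IntervalIntegrable f volume c d :=
  hf.mono_set <| by
    rw [uIcc_of_le hcd, uIcc_of_le (hac.trans (hcd.trans hdb))]
    exact Icc_subset_Icc hac hdb

theorem intervalIntegrable_comp_sub_left_zero {f : ℝ → ℝ} {u : ℝ}
    (hf : IntervalIntegrable f volume 0 u) :
    IntervalIntegrable (fun t => f (u - t)) volume 0 u := by
  simpa only [sub_zero, sub_self] using (hf.comp_sub_left u).symm

theorem eqOn_zero_of_continuousOn_of_le_mul_primitive {f : ℝ → ℝ} {a b K : ℝ}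
    (hf : ContinuousOn f (Icc a b)) (hf₀ : ∀ x ∈ Icc a b, 0 ≤ f x)
    (hle : ∀ x ∈ Icc a b, f x ≤ K * ∫ y in a..x, f y) : EqOn f 0 (Icc a b) := by
  intro x hx
  have hab : a ≤ b := hx.1.trans hx.2
  have hG : ∀ x ∈ Icc a b, ∫ y in a..x, f y = 0 := by
    refine eq_zero_of_abs_deriv_le_mul_abs_self_of_eq_zero_right (f' := f) (K := K)
      ?_ (fun x hx => ?_) intervalIntegral.integral_same fun x hx => ?_
    · simpa only [uIcc_of_le hab] using intervalIntegral.continuousOn_primitive_interval'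
        (hf.intervalIntegrable_of_Icc (μ := volume) hab) left_mem_uIcc
    · have hmem : Icc a b ∈ 𝓝[>] x := mem_of_superset (Ioc_mem_nhdsGT hx.2)
        fun y hy => ⟨hx.1.trans hy.1.le, hy.2⟩
      exact intervalIntegral.integral_hasDerivWithinAt_right
        ((hf.mono (Icc_subset_Icc_right hx.2.le)).intervalIntegrable_of_Icc hx.1)
        ⟨Icc a b, hmem, hf.aestronglyMeasurable measurableSet_Icc⟩
        ((hf x (Ico_subset_Icc_self hx)).mono_of_mem_nhdsWithin hmem)
    · have hG₀ : 0 ≤ ∫ y in a..x, f y := intervalIntegral.integral_nonneg hx.1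
        fun y hy => hf₀ y ⟨hy.1, hy.2.trans hx.2.le⟩
      rw [norm_of_nonneg (hf₀ x (Ico_subset_Icc_self hx)), norm_of_nonneg hG₀]
      exact hle x (Ico_subset_Icc_self hx)
  refine le_antisymm ((hle x hx).trans_eq ?_) (hf₀ x hx)
  rw [hG x hx, mul_zero, Pi.zero_apply]

theorem eqOn_zero_of_le_mul_primitive {f : ℝ → ℝ} {a b K : ℝ}
    (hf : IntervalIntegrable f volume a b) (hf₀ : ∀ x ∈ Icc a b, 0 ≤ f x)
    (hle : ∀ x ∈ Icc a b, f x ≤ K * ∫ y in a..x, f y) : EqOn f 0 (Icc a b) := by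
  intro x hx
  have hab : a ≤ b := hx.1.trans hx.2
  have hF : EqOn (fun x => ∫ y in a..x, f y) 0 (Icc a b) := by
    have hcont : ContinuousOn (fun x => ∫ y in a..x, f y) (Icc a b) := by
      simpa only [uIcc_of_le hab] using
        intervalIntegral.continuousOn_primitive_interval' hf left_mem_uIcc
    refine eqOn_zero_of_continuousOn_of_le_mul_primitive (K := K) hcont (fun x hx => ?_)
      fun x hx => ?_
    · exact intervalIntegral.integral_nonneg hx.1 fun y hy => hf₀ y ⟨hy.1, hy.2.trans hx.2⟩
    · rw [← intervalIntegral.integral_const_mul]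
      exact intervalIntegral.integral_mono_on hx.1
        (intervalIntegrable_subinterval hf le_rfl hx.1 hx.2)
        (((hcont.mono (Icc_subset_Icc_right hx.2)).intervalIntegrable_of_Icc hx.1).const_mul K)
        fun y hy => hle y ⟨hy.1, hy.2.trans hx.2⟩
  refine le_antisymm ((hle x hx).trans_eq ?_) (hf₀ x hx)
  rw [show ∫ y in a..x, f y = 0 from hF hx, mul_zero, Pi.zero_apply]

/-- A kernel for the delay equation: measurable, with values in `[0, 1]` on the half-line `t ≥ 0`,
the only place where the equation evaluates it. -/
structure IsDelayKernel (χ : ℝ → ℝ) : Prop where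
  measurable : Measurable χ
  mem_Icc : ∀ t, 0 ≤ t → χ t ∈ Icc (0 : ℝ) 1

namespace IsDelayKernel

variable {χ : ℝ → ℝ}

theorem nonneg (hχ : IsDelayKernel χ) {t : ℝ} (ht : 0 ≤ t) : 0 ≤ χ t :=
  (hχ.mem_Icc t ht).1

theorem le_one (hχ : IsDelayKernel χ) {t : ℝ} (ht : 0 ≤ t) : χ t ≤ 1 :=
  (hχ.mem_Icc t ht).2

theorem nonneg_of_one_lt (hχ : IsDelayKernel χ) (t : ℝ) (ht : 1 < t) : 0 ≤ χ t :=
  hχ.nonneg (zero_le_one.trans ht.le)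

theorem integrableOn_mul {f : ℝ → ℝ} (hχ : IsDelayKernel χ) {s : Set ℝ}
    (hs : MeasurableSet s) (hs₀ : s ⊆ Ici 0) (hf : IntegrableOn f s) :
    IntegrableOn (fun t => f t * χ t) s := by
  refine hf.mul_bdd (c := 1) hχ.measurable.aestronglyMeasurable
    (ae_restrict_of_forall_mem hs fun t ht => ?_)
  rw [norm_of_nonneg (hχ.nonneg (hs₀ ht))]
  exact hχ.le_one (hs₀ ht)

theorem integrableOn_mul_exp (hχ : IsDelayKernel χ) {a : ℝ} (ha : 0 ≤ a) (b s : ℝ) :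
    IntegrableOn (fun t => χ t * exp (s * t)) (Ioc a b) := by
  simpa only [mul_comm] using hχ.integrableOn_mul measurableSet_Ioc (fun t ht => ha.trans ht.1.le)
    (Continuous.integrableOn_Ioc (f := fun t => exp (s * t)) (by fun_prop))

theorem intervalIntegrable_convolution {f : ℝ → ℝ} (hχ : IsDelayKernel χ) {u : ℝ}
    (hu : 0 ≤ u) (hf : IntervalIntegrable f volume 0 u) :
    IntervalIntegrable (fun t => f (u - t) * χ t) volume 0 u := by
  have hf' := intervalIntegrable_comp_sub_left_zero hf
  rw [intervalIntegrable_iff_integrableOn_Ioc_of_le hu] at hf' ⊢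
  exact hχ.integrableOn_mul measurableSet_Ioc (fun t ht => ht.1.le) hf'

theorem nonneg_of_convolution_le {f : ℝ → ℝ} (hχ : IsDelayKernel χ) {u₀ U : ℝ}
    (hu₀ : 1 ≤ u₀) (hf : IntervalIntegrable f volume 0 U) (hf₀ : ∀ u ∈ Icc 0 u₀, 0 ≤ f u)
    (hle : ∀ u ∈ Ioc u₀ U, ∫ t in (0 : ℝ)..u, f (u - t) * χ t ≤ u * f u) :
    ∀ u ∈ Icc 0 U, 0 ≤ f u := by
  have hneg : ∀ u ∈ Icc 0 U, IntervalIntegrable (fun x => (f x)⁻) volume 0 u := fun u hu => by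
    have := intervalIntegrable_subinterval hf le_rfl hu.1 hu.2
    rw [intervalIntegrable_iff_integrableOn_Ioc_of_le hu.1] at this ⊢
    exact this.neg_part
  have hprim : ∀ u ∈ Icc 0 U, 0 ≤ ∫ x in (0 : ℝ)..u, (f x)⁻ := fun u hu =>
    intervalIntegral.integral_nonneg hu.1 fun _ _ => negPart_nonneg _
  suffices hgronwall : ∀ u ∈ Icc 0 U, (f u)⁻ ≤ 1 * ∫ x in (0 : ℝ)..u, (f x)⁻ from fun u hu =>
    negPart_eq_zero.1 (eqOn_zero_of_le_mul_primitive
      (hneg U ⟨hu.1.trans hu.2, le_rfl⟩) (fun _ _ => negPart_nonneg _) hgronwall hu)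
  intro u hu
  rw [one_mul]
  rcases le_or_gt 0 (f u) with hfu | hfu
  · rw [negPart_eq_zero.2 hfu]
    exact hprim u hu
  have hlt : u₀ < u := by
    by_contra! h
    exact hfu.not_ge (hf₀ u ⟨hu.1, h⟩)
  have hint := hχ.intervalIntegrable_convolution hu.1
    (intervalIntegrable_subinterval hf le_rfl hu.1 hu.2)
  have hconv : -∫ t in (0 : ℝ)..u, f (u - t) * χ t ≤ ∫ x in (0 : ℝ)..u, (f x)⁻ := by
    calc -∫ t in (0 : ℝ)..u, f (u - t) * χ t
        = ∫ t in (0 : ℝ)..u, -f (u - t) * χ t := by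
          simp only [neg_mul, intervalIntegral.integral_neg]
      _ ≤ ∫ t in (0 : ℝ)..u, (f (u - t))⁻ := by
          refine intervalIntegral.integral_mono_on hu.1 (by simp only [neg_mul]; exact hint.neg)
            (intervalIntegrable_comp_sub_left_zero (hneg u hu)) fun t ht => ?_
          exact (mul_le_mul_of_nonneg_right (neg_le_negPart _) (hχ.nonneg ht.1)).trans
            (mul_le_of_le_one_right (negPart_nonneg _) (hχ.le_one ht.1))
      _ = ∫ x in (0 : ℝ)..u, (f x)⁻ := by
          simpa using intervalIntegral.integral_comp_sub_left (a := 0) (b := u)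
            (fun x => (f x)⁻) u
  rw [negPart_of_nonpos hfu.le]
  nlinarith [hle u ⟨hlt, hu.2⟩]

theorem le_of_convolution_le {f g : ℝ → ℝ} (hχ : IsDelayKernel χ) {u₀ U : ℝ}
    (hu₀ : 1 ≤ u₀) (hf : IntervalIntegrable f volume 0 U) (hg : IntervalIntegrable g volume 0 U)
    (h₀ : ∀ u ∈ Icc 0 u₀, f u ≤ g u)
    (hsub : ∀ u ∈ Ioc u₀ U, u * f u ≤ ∫ t in (0 : ℝ)..u, f (u - t) * χ t)
    (hsup : ∀ u ∈ Ioc u₀ U, ∫ t in (0 : ℝ)..u, g (u - t) * χ t ≤ u * g u) :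
    ∀ u ∈ Icc 0 U, f u ≤ g u := by
  suffices ∀ u ∈ Icc 0 U, 0 ≤ g u - f u from fun u hu => sub_nonneg.1 (this u hu)
  refine hχ.nonneg_of_convolution_le hu₀ (hg.sub hf) (fun u hu => sub_nonneg.2 (h₀ u hu))
    fun u hu => ?_
  have hu' : 0 ≤ u := by linarith [hu.1]
  have hconv : ∀ {k : ℝ → ℝ}, IntervalIntegrable k volume 0 U →
      IntervalIntegrable (fun t => k (u - t) * χ t) volume 0 u := fun hk =>
    hχ.intervalIntegrable_convolution hu' (intervalIntegrable_subinterval hk le_rfl hu' hu.2)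
  simp only [sub_mul, mul_sub]
  rw [intervalIntegral.integral_sub (hconv hg) (hconv hf)]
  exact sub_le_sub (hsup u hu) (hsub u hu)

end IsDelayKernel

theorem intervalIntegrable_of_forall_lt {f : ℝ → ℝ} {a b C : ℝ} (hab : a ≤ b)
    (hf : ∀ y ∈ Ico a b, IntervalIntegrable f volume a y) (hC : ∀ y ∈ Ioo a b, ‖f y‖ ≤ C) :
    IntervalIntegrable f volume a b := by
  rcases hab.eq_or_lt with rfl | hab
  · exact .refl
  obtain ⟨y, -, hy, hyb⟩ := exists_seq_strictMono_tendsto' hab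
  have hfy : ∀ n, IntegrableOn f (Ioc a (y n)) := fun n =>
    (intervalIntegrable_iff_integrableOn_Ioc_of_le (hy n).1.le).1
      (hf _ (Ioo_subset_Ico_self (hy n)))
  rw [intervalIntegrable_iff_integrableOn_Ioc_of_le hab.le]
  refine integrableOn_Ioc_of_intervalIntegral_norm_bounded_right (I := C * (b - a)) hfy hyb
    (Eventually.of_forall fun n => ?_)
  have hC₀ : 0 ≤ C := (norm_nonneg _).trans (hC _ (hy n))
  calc ∫ x in Ioc a (y n), ‖f x‖ ≤ ∫ _ in Ioc a (y n), C :=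
        setIntegral_mono_on (hfy n).norm (integrableOn_const measure_Ioc_lt_top.ne)
          measurableSet_Ioc fun x hx => hC x ⟨hx.1, hx.2.trans_lt (hy n).2⟩
    _ = C * (y n - a) := by simp [(hy n).1.le, mul_comm]
    _ ≤ C * (b - a) := by gcongr; exact (hy n).2.le

/-- A solution of the delay equation `u σ(u) = ∫₀ᵘ σ(u - t) χ(t) dt` for `u > 1` with initial
value `1` on `[0, 1]`. No integrability is assumed, so a priori the integral could be the junk
value `0`. -/
structure IsDelaySolution (χ σ : ℝ → ℝ) : Prop where
  eq_one : ∀ u, 0 ≤ u → u ≤ 1 → σ u = 1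
  mul_eq : ∀ u, 1 < u → u * σ u = ∫ t in (0 : ℝ)..u, σ (u - t) * χ t

namespace IsDelaySolution

variable {χ σ : ℝ → ℝ}

theorem mem_Icc_of_intervalIntegrable (hσ : IsDelaySolution χ σ) (hχ : IsDelayKernel χ) {U : ℝ}
    (hint : IntervalIntegrable σ volume 0 U) {u : ℝ} (hu : u ∈ Icc 0 U) : σ u ∈ Icc (0 : ℝ) 1 := by
  constructor
  · refine hχ.nonneg_of_convolution_le le_rfl hint (fun x hx => ?_)
      (fun x hx => (hσ.mul_eq x hx.1).ge) u hu
    rw [hσ.eq_one x hx.1 hx.2]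
    exact zero_le_one
  · refine hχ.le_of_convolution_le (g := fun _ => 1) le_rfl hint intervalIntegrable_const
      (fun x hx => (hσ.eq_one x hx.1 hx.2).le) (fun x hx => (hσ.mul_eq x hx.1).le)
      (fun x hx => ?_) u hu
    have hx₀ : 0 ≤ x := zero_le_one.trans hx.1.le
    have hle := intervalIntegral.integral_mono_on hx₀
      (hχ.intervalIntegrable_convolution (f := fun _ => 1) hx₀ intervalIntegrable_const)
      intervalIntegrable_const fun t ht => (one_mul (χ t)).trans_le (hχ.le_one ht.1)
    simpa using hle

theorem eq_zero_of_not_intervalIntegrable (hσ : IsDelaySolution χ σ)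
    (hχ₁ : ∀ t ∈ Icc (0 : ℝ) 1, χ t = 1) {x u : ℝ} (hu : 1 < u) (hux : u - 1 ≤ x) (hxu : x ≤ u)
    (hx : IntervalIntegrable σ volume 0 x) (hnot : ¬IntervalIntegrable σ volume 0 u) :
    σ u = 0 := by
  suffices hconv : ¬IntervalIntegrable (fun t => σ (u - t) * χ t) volume 0 u by
    have := hσ.mul_eq u hu
    rw [intervalIntegral.integral_undef hconv] at this
    exact (mul_eq_zero.1 this).resolve_left (by linarith)
  intro hconv
  refine hnot (hx.trans ?_)
  have hσu : IntervalIntegrable (fun t => σ (u - t)) volume 0 (u - x) := by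
    refine (intervalIntegrable_subinterval hconv le_rfl (sub_nonneg.2 hxu) (by linarith)).congr
      fun t ht => ?_
    rw [uIoc_of_le (sub_nonneg.2 hxu)] at ht
    rw [hχ₁ t ⟨ht.1.le, by linarith [ht.2]⟩, mul_one]
  simpa using (hσu.comp_sub_left u).symm

/-- Continuous induction: were integrability to fail immediately beyond `x`, the equation would read
`u σ(u) = 0` there, and the zero function is integrable. -/
theorem intervalIntegrable (hσ : IsDelaySolution χ σ) (hχ : IsDelayKernel χ)
    (hχ₁ : ∀ t ∈ Icc (0 : ℝ) 1, χ t = 1) {U : ℝ} (hU : 0 ≤ U) :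
    IntervalIntegrable σ volume 0 U := by
  set S := {u | IntervalIntegrable σ volume 0 u}
  have hdown : ∀ {x y}, 0 ≤ x → x ≤ y → y ∈ S → x ∈ S := fun h₀ hxy hy =>
    intervalIntegrable_subinterval hy le_rfl h₀ hxy
  have hone : (1 : ℝ) ∈ S := intervalIntegrable_const (c := (1 : ℝ)).congr fun t ht => by
    rw [uIoc_of_le zero_le_one] at ht
    exact (hσ.eq_one t ht.1.le ht.2).symm
  have hclosed : IsClosed (S ∩ Icc 1 (max U 1)) := by
    refine isClosed_of_closure_subset fun x hx => ?_
    have hxI : x ∈ Icc 1 (max U 1) :=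
      isClosed_Icc.closure_subset (closure_mono inter_subset_right hx)
    have hbelow : ∀ y ∈ Ico 0 x, y ∈ S := fun y hy => by
      obtain ⟨z, hyz, hz, -⟩ := mem_closure_iff.1 hx _ isOpen_Ioi hy.2
      exact hdown hy.1 (le_of_lt hyz) hz
    refine ⟨intervalIntegrable_of_forall_lt (C := 1) (by linarith [hxI.1]) hbelow
      fun y hy => ?_, hxI⟩
    obtain ⟨h₀, h₁⟩ := hσ.mem_Icc_of_intervalIntegrable hχ (hbelow y (Ioo_subset_Ico_self hy))
      (right_mem_Icc.2 hy.1.le)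
    rwa [norm_of_nonneg h₀]
  have hextend : ∀ x ∈ S ∩ Ico 1 (max U 1), ∀ y ∈ Ioi x, (S ∩ Ioc x y).Nonempty := by
    rintro x ⟨hxS, hx, -⟩ y (hxy : x < y)
    by_contra! hempty
    have hxz : x ≤ min y (x + 1) := le_min hxy.le (by linarith)
    have hzero : ∀ w ∈ Ioc x (min y (x + 1)), 0 = σ w := fun w hw => by
      refine (hσ.eq_zero_of_not_intervalIntegrable hχ₁ (hx.trans_lt hw.1)
        (by linarith [hw.2.trans (min_le_right _ _)]) hw.1.le hxS fun hwS => ?_).symm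
      exact eq_empty_iff_forall_notMem.1 hempty w ⟨hwS, hw.1, hw.2.trans (min_le_left _ _)⟩
    have hzS : min y (x + 1) ∈ S := hxS.trans <|
      intervalIntegrable_const (c := (0 : ℝ)).congr fun w hw =>
        hzero w (by rwa [uIoc_of_le hxz] at hw)
    exact eq_empty_iff_forall_notMem.1 hempty _
      ⟨hzS, lt_min hxy (by linarith), min_le_left _ _⟩
  exact hdown hU (le_max_left _ _)
    (hclosed.Icc_subset_of_forall_exists_gt hone hextend (right_mem_Icc.2 (le_max_right _ _)))

theorem le_exp_sub (hσ : IsDelaySolution χ σ) (hχ : IsDelayKernel χ)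
    (hχ₁ : ∀ t ∈ Icc (0 : ℝ) 1, χ t = 1) {E : ℝ → ℝ} {u₀ U C : ℝ} (hu₀ : 1 ≤ u₀)
    (hE : IntervalIntegrable (fun x => exp (-E x)) volume 0 U) (h₀ : ∀ x ∈ Icc 0 u₀, E x ≤ C)
    (hsup : ∀ x ∈ Ioc u₀ U, ∃ s, (∀ t ∈ Icc 0 x, E x - E (x - t) ≤ s * t) ∧
      ∫ t in (0 : ℝ)..x, χ t * exp (s * t) ≤ x) {u : ℝ} (hu : u ∈ Icc 0 U) :
    σ u ≤ exp (C - E u) := by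
  have hint := hσ.intervalIntegrable hχ hχ₁ (hu.1.trans hu.2)
  have hg : IntervalIntegrable (fun x => exp (C - E x)) volume 0 U := by
    simpa only [sub_eq_add_neg, exp_add] using hE.const_mul (exp C)
  refine hχ.le_of_convolution_le hu₀ hint hg (fun x hx => ?_)
    (fun x hx => (hσ.mul_eq x (hu₀.trans_lt hx.1)).le) (fun x hx => ?_) u hu
  · have hxU : σ x ≤ 1 := (hσ.mem_Icc_of_intervalIntegrable hχ
      (hσ.intervalIntegrable hχ hχ₁ hx.1) ⟨hx.1, le_rfl⟩).2
    exact hxU.trans (one_le_exp (sub_nonneg.2 (h₀ x hx)))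
  · obtain ⟨s, hs, hmass⟩ := hsup x hx
    have hx₀ : 0 ≤ x := by linarith [hx.1]
    have hexp : IntervalIntegrable (fun t => χ t * exp (s * t)) volume 0 x :=
      (intervalIntegrable_iff_integrableOn_Ioc_of_le hx₀).2 (hχ.integrableOn_mul_exp le_rfl x s)
    calc ∫ t in (0 : ℝ)..x, exp (C - E (x - t)) * χ t
        ≤ ∫ t in (0 : ℝ)..x, exp (C - E x) * (χ t * exp (s * t)) := by
          refine intervalIntegral.integral_mono_on hx₀ (hχ.intervalIntegrable_convolution hx₀
            (intervalIntegrable_subinterval hg le_rfl hx₀ hx.2)) (hexp.const_mul _) fun t ht => ?_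
          rw [mul_left_comm, ← exp_add, mul_comm]
          refine mul_le_mul_of_nonneg_left (exp_le_exp.2 ?_) (hχ.nonneg ht.1)
          linarith [hs t ht]
      _ = exp (C - E x) * ∫ t in (0 : ℝ)..x, χ t * exp (s * t) :=
          intervalIntegral.integral_const_mul _ _
      _ ≤ exp (C - E x) * x := by gcongr
      _ = x * exp (C - E x) := mul_comm _ _

theorem mul_exp_sub_le (hσ : IsDelaySolution χ σ) (hχ : IsDelayKernel χ)
    (hχ₁ : ∀ t ∈ Icc (0 : ℝ) 1, χ t = 1) {E : ℝ → ℝ} {u₀ U C c : ℝ} (hu₀ : 1 ≤ u₀) (hc : 0 ≤ c)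
    (hE : IntervalIntegrable (fun x => exp (-E x)) volume 0 U) (h₀ : ∀ x ∈ Icc 0 u₀, C ≤ E x)
    (hcσ : ∀ x ∈ Icc 0 u₀, c ≤ σ x)
    (hsub : ∀ x ∈ Ioc u₀ U, ∃ A ⊆ Ioc 0 x, MeasurableSet A ∧ ∃ s,
      (∀ t ∈ A, s * t ≤ E x - E (x - t)) ∧ x ≤ ∫ t in A, χ t * exp (s * t)) {u : ℝ}
    (hu : u ∈ Icc 0 U) : c * exp (C - E u) ≤ σ u := by
  have hint := hσ.intervalIntegrable hχ hχ₁ (hu.1.trans hu.2)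
  have hf : IntervalIntegrable (fun x => c * exp (C - E x)) volume 0 U := by
    simpa only [sub_eq_add_neg, exp_add] using (hE.const_mul (exp C)).const_mul c
  refine hχ.le_of_convolution_le (f := fun x => c * exp (C - E x)) hu₀ hf hint (fun x hx => ?_)
    (fun x hx => ?_) (fun x hx => (hσ.mul_eq x (hu₀.trans_lt hx.1)).ge) u hu
  · exact (mul_le_of_le_one_right hc (exp_le_one_iff.2 (sub_nonpos.2 (h₀ x hx)))).trans (hcσ x hx)
  · obtain ⟨A, hAx, hA, s, hs, hmass⟩ := hsub x hx
    have hx₀ : 0 ≤ x := by linarith [hx.1]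
    have hexp : IntegrableOn (fun t => χ t * exp (s * t)) A :=
      (hχ.integrableOn_mul_exp le_rfl x s).mono_set hAx
    have hconv := hχ.intervalIntegrable_convolution hx₀
      (intervalIntegrable_subinterval hf le_rfl hx₀ hx.2)
    rw [intervalIntegrable_iff_integrableOn_Ioc_of_le hx₀] at hconv
    calc x * (c * exp (C - E x)) = c * exp (C - E x) * x := mul_comm _ _
      _ ≤ c * exp (C - E x) * ∫ t in A, χ t * exp (s * t) := by gcongr
      _ = ∫ t in A, c * exp (C - E x) * (χ t * exp (s * t)) := (integral_const_mul _ _).symm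
      _ ≤ ∫ t in A, c * exp (C - E (x - t)) * χ t := by
          refine setIntegral_mono_on (hexp.const_mul _) (hconv.mono_set hAx) hA fun t ht => ?_
          rw [mul_left_comm, mul_assoc c, ← exp_add, mul_comm]
          refine mul_le_mul_of_nonneg_right (mul_le_mul_of_nonneg_left (exp_le_exp.2 ?_) hc)
            (hχ.nonneg (hAx ht).1.le)
          linarith [hs t ht]
      _ ≤ ∫ t in Ioc 0 x, c * exp (C - E (x - t)) * χ t :=
          setIntegral_mono_set hconv (ae_restrict_of_forall_mem measurableSet_Ioc fun t ht =>
            mul_nonneg (mul_nonneg hc (exp_pos _).le) (hχ.nonneg ht.1.le)) hAx.eventuallyLE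
      _ = ∫ t in (0 : ℝ)..x, c * exp (C - E (x - t)) * χ t :=
          (intervalIntegral.integral_of_le hx₀).symm

theorem exists_pos_le (hσ : IsDelaySolution χ σ) (hχ : IsDelayKernel χ)
    (hχ₁ : ∀ t ∈ Icc (0 : ℝ) 1, χ t = 1) (U : ℝ) : ∃ c > 0, ∀ u ∈ Icc 0 U, c ≤ σ u := by
  -- `exp (-2 U x)` is a subsolution up to `U`, by the mass of `χ` on `[0, 1]` alone.
  rcases lt_or_ge U 0 with hU | hU
  · exact ⟨1, one_pos, fun u hu => absurd (hu.1.trans hu.2) hU.not_ge⟩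
  have hmass : ∀ x ∈ Ioc 1 U, x ≤ ∫ t in Ioc 0 1, χ t * exp (2 * U * t) := fun x hx => by
    calc x ≤ ∫ t in (0 : ℝ)..1, 1 + 2 * U * t := by
          rw [intervalIntegral.integral_add (by simp)
              (Continuous.intervalIntegrable (by fun_prop) _ _),
            intervalIntegral.integral_const_mul, integral_id]
          norm_num
          linarith [hx.2]
      _ = ∫ t in Ioc 0 1, 1 + 2 * U * t := intervalIntegral.integral_of_le zero_le_one
      _ ≤ ∫ t in Ioc 0 1, χ t * exp (2 * U * t) := by
          refine setIntegral_mono_on (Continuous.integrableOn_Ioc (by fun_prop))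
            (hχ.integrableOn_mul_exp le_rfl 1 _) measurableSet_Ioc fun t ht => ?_
          rw [hχ₁ t ⟨ht.1.le, ht.2⟩, one_mul, add_comm]
          exact add_one_le_exp _
  refine ⟨1 * exp (0 - 2 * U * U), by positivity, fun u hu => ?_⟩
  refine le_trans ?_ (hσ.mul_exp_sub_le hχ hχ₁ (E := fun x => 2 * U * x) le_rfl zero_le_one
    (Continuous.intervalIntegrable (by fun_prop) 0 U) (fun x hx => mul_nonneg (by positivity) hx.1)
    (fun x hx => (hσ.eq_one x hx.1 hx.2).ge) (fun x hx => ?_) hu)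
  · gcongr
    exact hu.2
  · exact ⟨Ioc 0 1, Ioc_subset_Ioc_right hx.1.le, measurableSet_Ioc, 2 * U,
      fun t _ => by rw [mul_sub, sub_sub_cancel], hmass x hx⟩

end IsDelaySolution

theorem exp_mul_setIntegral_mul_exp_le {f : ℝ → ℝ} {A : Set ℝ} {a s s' : ℝ}
    (hA : MeasurableSet A) (ha : A ⊆ Ici a) (hf : ∀ v ∈ A, 0 ≤ f v) (hss' : s ≤ s')
    (hs : IntegrableOn (fun v => f v * exp (s * v)) A)
    (hs' : IntegrableOn (fun v => f v * exp (s' * v)) A) :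
    exp ((s' - s) * a) * ∫ v in A, f v * exp (s * v) ≤ ∫ v in A, f v * exp (s' * v) := by
  rw [← integral_const_mul]
  refine setIntegral_mono_on (hs.const_mul _) hs' hA fun v hv => ?_
  rw [mul_left_comm, ← exp_add]
  refine mul_le_mul_of_nonneg_left (exp_le_exp.2 ?_) (hf v hv)
  nlinarith [mul_le_mul_of_nonneg_left (ha hv) (sub_nonneg.2 hss')]

theorem rpow_isLittleO_id {p : ℝ} (hp : p < 1) : (fun x : ℝ => x ^ p) =o[atTop] fun x => x := by
  refine isLittleO_of_tendsto' ((eventually_ne_atTop 0).mono fun x hx h => absurd h hx) ?_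
  refine (tendsto_rpow_neg_atTop (sub_pos.2 hp)).congr' ?_
  filter_upwards [eventually_ne_atTop 0] with x hx
  rw [neg_sub, rpow_sub_one hx]

/-- `ξ` solves the saddle point equation `u = ∫₁^∞ χ(v) e^{ξ(u) v} dv` for every `u > 1`.
As the left side is nonzero, the integral is never the junk value `0`. -/
def IsSaddleFunction (χ ξ : ℝ → ℝ) : Prop :=
  ∀ u, 1 < u → u = ∫ v in Ioi 1, χ v * exp (ξ u * v)

/-- The Legendre-type exponent `ξ(u) u - ∫₁^∞ χ(v) e^{ξ(u) v} / v dv`, to which `-log σ(u)` is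
compared. -/
noncomputable def saddleExponent (χ ξ : ℝ → ℝ) (u : ℝ) : ℝ :=
  ξ u * u - ∫ v in Ioi 1, χ v * exp (ξ u * v) / v

namespace IsSaddleFunction

variable {χ ξ : ℝ → ℝ}

theorem integrableOn (hξ : IsSaddleFunction χ ξ) {u : ℝ} (hu : 1 < u) :
    IntegrableOn (fun v => χ v * exp (ξ u * v)) (Ioi 1) := by
  by_contra h
  have := hξ u hu
  rw [integral_undef h] at this
  linarith

theorem integrableOn_div (hξ : IsSaddleFunction χ ξ) {u : ℝ} (hu : 1 < u) :
    IntegrableOn (fun v => χ v * exp (ξ u * v) / v) (Ioi 1) := by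
  simp only [div_eq_mul_inv]
  refine (hξ.integrableOn hu).mul_bdd (c := 1) measurable_inv.aestronglyMeasurable
    (ae_restrict_of_forall_mem measurableSet_Ioi fun v (hv : 1 < v) => ?_)
  rw [norm_of_nonneg (by positivity)]
  exact inv_le_one_of_one_le₀ hv.le

theorem exp_mul_le (hξ : IsSaddleFunction χ ξ) (hχ : ∀ v, 1 < v → 0 ≤ χ v) {x y : ℝ} (hx : 1 < x)
    (hy : 1 < y) (hxy : ξ x ≤ ξ y) : exp (ξ y - ξ x) * x ≤ y := by
  have h := exp_mul_setIntegral_mul_exp_le measurableSet_Ioi Ioi_subset_Ici_self hχ hxy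
    (hξ.integrableOn hx) (hξ.integrableOn hy)
  rwa [← hξ x hx, ← hξ y hy, mul_one] at h

theorem mono (hξ : IsSaddleFunction χ ξ) (hχ : ∀ v, 1 < v → 0 ≤ χ v) {x y : ℝ} (hx : 1 < x)
    (hxy : x ≤ y) : ξ x ≤ ξ y := by
  by_contra! hlt
  have h := hξ.exp_mul_le hχ (hx.trans_le hxy) hx hlt.le
  nlinarith [one_lt_exp_iff.2 (sub_pos.2 hlt)]

theorem le_add_log (hξ : IsSaddleFunction χ ξ) (hχ : ∀ v, 1 < v → 0 ≤ χ v) {x y : ℝ} (hx : 1 < x)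
    (hxy : x ≤ y) : ξ y ≤ ξ x + log (y / x) := by
  have hx₀ : 0 < x := zero_lt_one.trans hx
  have h : exp (ξ y - ξ x) ≤ y / x :=
    (le_div_iff₀ hx₀).2 (hξ.exp_mul_le hχ hx (hx.trans_le hxy) (hξ.mono hχ hx hxy))
  linarith [(le_log_iff_exp_le (div_pos (hx₀.trans_le hxy) hx₀)).2 h]

theorem saddleExponent_sub_le (hξ : IsSaddleFunction χ ξ) (hχ : ∀ v, 1 < v → 0 ≤ χ v) {x y : ℝ}
    (hx : 1 < x) (hy : 1 < y) :
    saddleExponent χ ξ y - saddleExponent χ ξ x ≤ ξ y * (y - x) := by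
  have htangent : ∫ v in Ioi 1, (χ v * exp (ξ x * v) / v +
      (ξ y - ξ x) * (χ v * exp (ξ x * v))) ≤ ∫ v in Ioi 1, χ v * exp (ξ y * v) / v := by
    refine setIntegral_mono_on ((hξ.integrableOn_div hx).add ((hξ.integrableOn hx).const_mul _))
      (hξ.integrableOn_div hy) measurableSet_Ioi fun v (hv : 1 < v) => ?_
    have hχv := hχ v hv
    calc χ v * exp (ξ x * v) / v + (ξ y - ξ x) * (χ v * exp (ξ x * v))
        = χ v * (exp (ξ x * v) * ((ξ y - ξ x) * v + 1)) / v := by field_simp; ring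
      _ ≤ χ v * (exp (ξ x * v) * exp ((ξ y - ξ x) * v)) / v := by
          gcongr
          exact add_one_le_exp _
      _ = χ v * exp (ξ y * v) / v := by rw [← exp_add, ← add_mul, add_sub_cancel]
  rw [integral_add (hξ.integrableOn_div hx) ((hξ.integrableOn hx).const_mul _),
    integral_const_mul, ← hξ x hx] at htangent
  simp only [saddleExponent]
  linarith

theorem monotone_saddleExponent_max (hξ : IsSaddleFunction χ ξ) (hχ : ∀ v, 1 < v → 0 ≤ χ v)
    {u₁ : ℝ} (hu₁ : 1 < u₁) (hξ₁ : 0 ≤ ξ u₁) :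
    Monotone fun x => saddleExponent χ ξ (max x u₁) := by
  intro x y hxy
  have hmax : max x u₁ ≤ max y u₁ := max_le_max_right _ hxy
  have hx : u₁ ≤ max x u₁ := le_max_right _ _
  have hle := hξ.saddleExponent_sub_le hχ (hu₁.trans_le (hx.trans hmax)) (hu₁.trans_le hx)
  have hpos : 0 ≤ ξ (max x u₁) := hξ₁.trans (hξ.mono hχ hu₁ hx)
  simp only
  nlinarith

theorem eventually_nonneg (hξ : IsSaddleFunction χ ξ) (hχ : ∀ v, 1 < v → 0 ≤ χ v)
    (hint : IntegrableOn χ (Ioi 1)) : ∀ᶠ u in atTop, 0 ≤ ξ u := by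
  filter_upwards [eventually_gt_atTop 1, eventually_ge_atTop (∫ v in Ioi 1, χ v)] with u hu hle
  by_contra! hneg
  have h := exp_mul_setIntegral_mul_exp_le (s' := 0) measurableSet_Ioi Ioi_subset_Ici_self hχ
    hneg.le (hξ.integrableOn hu) (by simpa using hint)
  simp only [← hξ u hu, zero_sub, mul_one, zero_mul, exp_zero] at h
  nlinarith [one_lt_exp_iff.2 (neg_pos.2 hneg)]

theorem exists_setIntegral_pos (hξ : IsSaddleFunction χ ξ) (hχ : ∀ v, 1 < v → 0 ≤ χ v)
    (hint : IntegrableOn χ (Ioi 1)) : ∃ a, 1 < a ∧ 0 < ∫ v in Ioi a, χ v := by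
  have hχ_ae : 0 ≤ᵐ[volume.restrict (Ioi 1)] χ := ae_restrict_of_forall_mem measurableSet_Ioi hχ
  have hpos : 0 < ∫ v in Ioi 1, χ v := by
    refine (integral_nonneg_of_ae hχ_ae).lt_of_ne' fun hzero => ?_
    have hmass : (∫ v in Ioi 1, χ v * exp (ξ 2 * v)) = 0 := integral_eq_zero_of_ae <|
      ((integral_eq_zero_iff_of_nonneg_ae hχ_ae hint).1 hzero).mono fun v hv => by simp [hv]
    linarith [hξ 2 one_lt_two]
  have hlim : Tendsto (fun a => ∫ v in Ioi a, χ v ∂volume.restrict (Ioi 1)) (𝓝[>] 1)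
      (𝓝 (∫ v in Ioi 1, χ v)) :=
    (aecover_Ioi_of_Ioi (tendsto_id'.2 nhdsWithin_le_nhds)).integral_tendsto_of_countably_generated
      hint
  obtain ⟨a, ha, ha₁⟩ := ((hlim.eventually_const_lt hpos).and self_mem_nhdsWithin).exists
  rw [Measure.restrict_restrict measurableSet_Ioi,
    inter_eq_left.2 (Ioi_subset_Ioi (le_of_lt ha₁))] at ha
  exact ⟨a, ha₁, ha⟩

theorem exp_isLittleO (hξ : IsSaddleFunction χ ξ) (hχ : ∀ v, 1 < v → 0 ≤ χ v)
    (hint : IntegrableOn χ (Ioi 1)) : (fun u => exp (ξ u)) =o[atTop] fun u => u := by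
  obtain ⟨a, ha, hpos⟩ := hξ.exists_setIntegral_pos hχ hint
  have ha₀ : 0 < a := zero_lt_one.trans ha
  have hsub : Ioi a ⊆ Ioi 1 := Ioi_subset_Ioi ha.le
  have hmarkov : (fun u => exp (ξ u) ^ a) =O[atTop] fun u => u := by
    refine IsBigO.of_bound (∫ v in Ioi a, χ v)⁻¹ ?_
    filter_upwards [eventually_gt_atTop 1, hξ.eventually_nonneg hχ hint] with u hu hξu
    have htail := exp_mul_setIntegral_mul_exp_le (s := 0) measurableSet_Ioi Ioi_subset_Ici_self
      (fun v hv => hχ v (hsub hv)) hξu (by simpa using hint.mono_set hsub)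
      ((hξ.integrableOn hu).mono_set hsub)
    have htotal : ∫ v in Ioi a, χ v * exp (ξ u * v) ≤ u := by
      conv_rhs => rw [hξ u hu]
      exact setIntegral_mono_set (hξ.integrableOn hu) (ae_restrict_of_forall_mem measurableSet_Ioi
        fun v hv => mul_nonneg (hχ v hv) (exp_pos _).le) hsub.eventuallyLE
    simp only [sub_zero, zero_mul, exp_zero, mul_one] at htail
    rw [norm_of_nonneg (by positivity), norm_of_nonneg (by positivity), ← exp_mul,
      le_inv_mul_iff₀' hpos]
    exact htail.trans htotal
  have hroot := hmarkov.rpow (r := a⁻¹) (by positivity) (eventually_ge_atTop 0)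
  simp only [← rpow_mul (exp_pos _).le, mul_inv_cancel₀ ha₀.ne', rpow_one] at hroot
  exact hroot.trans_isLittleO (rpow_isLittleO_id (inv_lt_one_of_one_lt₀ ha))

theorem intervalIntegral_exp_sub_mul_le (hξ : IsSaddleFunction χ ξ) (hχ : IsDelayKernel χ)
    {δ u : ℝ} (hδ : 0 ≤ δ) (hu : 1 < u) (hξu : 0 ≤ ξ u)
    (hexp : exp (ξ u) ≤ (1 - exp (-δ)) * u) :
    ∫ t in (0 : ℝ)..u, χ t * exp ((ξ u - δ) * t) ≤ u := by
  have hint : ∀ {a b : ℝ}, 0 ≤ a → a ≤ b →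
      IntervalIntegrable (fun t => χ t * exp ((ξ u - δ) * t)) volume a b := fun ha hab =>
    (intervalIntegrable_iff_integrableOn_Ioc_of_le hab).2 (hχ.integrableOn_mul_exp ha _ _)
  have hhead : ∫ t in (0 : ℝ)..1, χ t * exp ((ξ u - δ) * t) ≤ exp (ξ u) := by
    have hle := intervalIntegral.integral_mono_on zero_le_one (hint le_rfl zero_le_one)
      (intervalIntegrable_const (c := exp (ξ u))) fun t ht =>
        (mul_le_of_le_one_left (exp_pos _).le (hχ.le_one ht.1)).trans (exp_le_exp.2 (by
          nlinarith [mul_nonneg hδ ht.1, mul_nonneg hξu (sub_nonneg.2 ht.2)]))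
    simpa using hle
  have htail : ∫ t in (1 : ℝ)..u, χ t * exp ((ξ u - δ) * t) ≤ exp (-δ) * u := by
    rw [intervalIntegral.integral_of_le hu.le, exp_neg, le_inv_mul_iff₀ (exp_pos δ)]
    calc exp δ * ∫ t in Ioc 1 u, χ t * exp ((ξ u - δ) * t)
        ≤ ∫ t in Ioc 1 u, χ t * exp (ξ u * t) := by
          simpa using exp_mul_setIntegral_mul_exp_le (a := 1) measurableSet_Ioc
            (fun t ht => ht.1.le) (fun t ht => hχ.nonneg (zero_le_one.trans ht.1.le))
            (sub_le_self (ξ u) hδ) (hχ.integrableOn_mul_exp zero_le_one u _)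
            (hχ.integrableOn_mul_exp zero_le_one u _)
      _ ≤ ∫ t in Ioi 1, χ t * exp (ξ u * t) :=
          setIntegral_mono_set (hξ.integrableOn hu) (ae_restrict_of_forall_mem measurableSet_Ioi
            fun t ht => mul_nonneg (hχ.nonneg (zero_le_one.trans (le_of_lt ht))) (exp_pos _).le)
            Ioc_subset_Ioi_self.eventuallyLE
      _ = u := (hξ u hu).symm
  rw [← intervalIntegral.integral_add_adjacent_intervals (hint le_rfl zero_le_one)
    (hint zero_le_one hu.le)]
  linarith

end IsSaddleFunction

/-- Up to the tilt `δ`, the integral in the saddle point equation is carried by `v ≤ δ u`, a range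
on which a shift of `u` by `v` barely changes `ξ`. -/
def SaddleConcentrated (χ ξ : ℝ → ℝ) : Prop :=
  ∀ δ > 0, ∀ᶠ u in atTop, u ≤ ∫ t in Ioc 1 (δ * u), χ t * exp ((ξ u + δ) * t)

theorem intervalIntegrable_exp_neg_add_mul_of_monotone {f : ℝ → ℝ} (hf : Monotone f)
    (κ a b : ℝ) : IntervalIntegrable (fun x => exp (-(f x + κ * x))) volume a b := by
  have hanti : Antitone fun x => exp (-f x) := fun x y hxy => exp_le_exp.2 (neg_le_neg (hf hxy))
  simp only [neg_add, exp_add]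
  exact hanti.intervalIntegrable.mul_continuousOn (Continuous.continuousOn (by fun_prop))

theorem isLittleO_id_of_forall_le_add_mul {f : ℝ → ℝ}
    (hupper : ∀ δ > 0, ∃ C, ∀ᶠ u in atTop, f u ≤ C + δ * u)
    (hlower : ∀ δ > 0, ∃ C, ∀ᶠ u in atTop, C - δ * u ≤ f u) : f =o[atTop] fun u => u := by
  refine isLittleO_iff.2 fun ε hε => ?_
  obtain ⟨C, hC⟩ := hupper (ε / 2) (half_pos hε)
  obtain ⟨c, hc⟩ := hlower (ε / 2) (half_pos hε)
  have hlin : Tendsto (fun u => ε / 2 * u) atTop atTop :=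
    tendsto_id.const_mul_atTop (half_pos hε)
  filter_upwards [hC, hc, hlin.eventually_ge_atTop C, hlin.eventually_ge_atTop (-c),
    eventually_ge_atTop 0] with u hCu hcu hC' hc' hu
  rw [norm_of_nonneg hu, norm_eq_abs, abs_le]
  constructor <;> linarith

section Asymptotics

variable {χ σ ξ : ℝ → ℝ}

theorem IsDelaySolution.eventually_log_add_saddleExponent_le (hσ : IsDelaySolution χ σ)
    (hχ : IsDelayKernel χ) (hχ₁ : ∀ t ∈ Icc (0 : ℝ) 1, χ t = 1) (hint : IntegrableOn χ (Ioi 1))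
    (hξ : IsSaddleFunction χ ξ) {δ : ℝ} (hδ : 0 < δ) :
    ∃ C, ∀ᶠ u in atTop, log (σ u) + saddleExponent χ ξ u ≤ C + δ * u := by
  have hχ₀ := hχ.nonneg_of_one_lt
  have hε : 0 < 1 - exp (-δ) := sub_pos.2 (exp_lt_one_iff.2 (neg_lt_zero.2 hδ))
  have hexp : ∀ᶠ u in atTop, exp (ξ u) ≤ (1 - exp (-δ)) * u := by
    filter_upwards [(hξ.exp_isLittleO hχ₀ hint).bound hε, eventually_ge_atTop 0] with u hle hu
    rwa [norm_of_nonneg (exp_pos _).le, norm_of_nonneg hu] at hle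
  obtain ⟨u₁, hu₁, hξ₁⟩ := ((eventually_gt_atTop 1).and (hξ.eventually_nonneg hχ₀ hint)).exists
  obtain ⟨u₀, hu₀⟩ := eventually_atTop.1 (hexp.and (eventually_ge_atTop u₁))
  have h₁₀ : u₁ ≤ u₀ := (hu₀ u₀ le_rfl).2
  have hmono := hξ.monotone_saddleExponent_max hχ₀ hu₁ hξ₁
  refine ⟨saddleExponent χ ξ u₀, ?_⟩
  filter_upwards [eventually_ge_atTop u₀] with u hu
  have hle := hσ.le_exp_sub hχ hχ₁ (E := fun x => saddleExponent χ ξ (max x u₁) + -δ * x)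
    (u₀ := u₀) (C := saddleExponent χ ξ u₀) (by linarith)
    (intervalIntegrable_exp_neg_add_mul_of_monotone hmono (-δ) 0 u) (fun x hx => ?_)
    (fun x hx => ⟨ξ x - δ, fun t _ => ?_, ?_⟩) (right_mem_Icc.2 (by linarith))
  · obtain ⟨c, hc, hcσ⟩ := hσ.exists_pos_le hχ hχ₁ u
    rw [max_eq_left (h₁₀.trans hu),
      ← log_le_iff_le_exp (hc.trans_le (hcσ u (right_mem_Icc.2 (by linarith))))] at hle
    linarith
  · have hx₀ := hmono hx.2
    simp only [max_eq_left h₁₀] at hx₀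
    nlinarith [hx.1]
  · have hx₁ : u₁ ≤ x := h₁₀.trans hx.1.le
    have hsub := hξ.saddleExponent_sub_le hχ₀ (hu₁.trans_le (le_max_right (x - t) u₁))
      (hu₁.trans_le hx₁)
    have hξt := mul_le_mul_of_nonneg_left (sub_le_comm.1 (le_max_left (x - t) u₁))
      (hξ₁.trans (hξ.mono hχ₀ hu₁ hx₁))
    rw [max_eq_left hx₁]
    linarith
  · exact hξ.intervalIntegral_exp_sub_mul_le hχ hδ.le (hu₁.trans_le (h₁₀.trans hx.1.le))
      (hξ₁.trans (hξ.mono hχ₀ hu₁ (h₁₀.trans hx.1.le))) (hu₀ x hx.1.le).1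

theorem IsSaddleFunction.le_shift_add (hξ : IsSaddleFunction χ ξ) (hχ : ∀ v, 1 < v → 0 ≤ χ v)
    {δ x t : ℝ} (hδ : δ ≤ 1 / 2) (hx : 2 < x) (ht₀ : 0 ≤ t) (ht : t ≤ δ * x) :
    ξ x ≤ ξ (x - t) + 2 * δ := by
  have hhalf : x / 2 ≤ x - t := by nlinarith
  have hlog : log (x / (x - t)) ≤ 2 * δ := by
    refine (log_le_sub_one_of_pos (div_pos (by linarith) (by linarith))).trans ?_
    rw [sub_le_iff_le_add, div_le_iff₀ (by linarith)]
    nlinarith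
  linarith [hξ.le_add_log hχ (show 1 < x - t by linarith) (sub_le_self x ht₀)]

theorem IsDelaySolution.eventually_le_log_add_saddleExponent (hσ : IsDelaySolution χ σ)
    (hχ : IsDelayKernel χ) (hχ₁ : ∀ t ∈ Icc (0 : ℝ) 1, χ t = 1) (hint : IntegrableOn χ (Ioi 1))
    (hξ : IsSaddleFunction χ ξ) (hconc : SaddleConcentrated χ ξ) {δ : ℝ} (hδ : 0 < δ) :
    ∃ C, ∀ᶠ u in atTop, C - δ * u ≤ log (σ u) + saddleExponent χ ξ u := by
  have hχ₀ := hχ.nonneg_of_one_lt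
  obtain ⟨η, hη, hη₂, hη₃⟩ : ∃ η > 0, η ≤ 1 / 2 ∧ 3 * η ≤ δ :=
    ⟨min (δ / 3) (1 / 2), by positivity, min_le_right _ _,
      by linarith [min_le_left (δ / 3) (1 / 2)]⟩
  obtain ⟨u₁, hu₁, hξ₁⟩ := ((eventually_gt_atTop 1).and (hξ.eventually_nonneg hχ₀ hint)).exists
  obtain ⟨u₀, hu₀⟩ := eventually_atTop.1 ((hconc η hη).and (eventually_ge_atTop (2 * u₁)))
  have h₁₀ : 2 * u₁ ≤ u₀ := (hu₀ u₀ le_rfl).2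
  have hmono := hξ.monotone_saddleExponent_max hχ₀ hu₁ hξ₁
  obtain ⟨c, hc, hcσ⟩ := hσ.exists_pos_le hχ hχ₁ u₀
  refine ⟨log c + saddleExponent χ ξ u₁, ?_⟩
  filter_upwards [eventually_ge_atTop u₀] with u hu
  have hle := hσ.mul_exp_sub_le hχ hχ₁ (E := fun x => saddleExponent χ ξ (max x u₁) + 3 * η * x)
    (u₀ := u₀) (C := saddleExponent χ ξ u₁) (by linarith) hc.le
    (intervalIntegrable_exp_neg_add_mul_of_monotone hmono (3 * η) 0 u) (fun x hx => ?_) hcσ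
    (fun x hx => ⟨Ioc 1 (η * x), Ioc_subset_Ioc zero_le_one ?_, measurableSet_Ioc, ξ x + η,
      fun t ht => ?_, (hu₀ x hx.1.le).1⟩) (right_mem_Icc.2 (by linarith))
  · rw [max_eq_left (by linarith)] at hle
    have hlog := log_le_log (by positivity) hle
    rw [log_mul hc.ne' (exp_pos _).ne', log_exp] at hlog
    nlinarith
  · have hx₁ := hmono hx.1
    simp only [max_eq_right (show (0 : ℝ) ≤ u₁ by linarith)] at hx₁
    nlinarith [hx.1]
  · nlinarith [hx.1]
  · have hxt : u₁ ≤ x - t := by nlinarith [ht.2, hx.1]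
    have ht₀ : 0 ≤ t := zero_le_one.trans ht.1.le
    have hsub := hξ.saddleExponent_sub_le hχ₀ (x := x) (by linarith [hx.1]) (hu₁.trans_le hxt)
    have hshift := mul_le_mul_of_nonneg_right
      (hξ.le_shift_add hχ₀ hη₂ (show 2 < x by linarith [hx.1]) ht₀ ht.2) ht₀
    rw [max_eq_left hxt, max_eq_left (by linarith)]
    linarith

end Asymptotics

/-- The decay regime common to both cases of the theorem: up to a factor `e^{o(t)}`, the function
`χ(t)` is `g(t) ^ t` for an antitone `g` with limit `0`. A function vanishing almost everywhere
near infinity has `g = 0`, and `χ(t) = ((1 + o(1)) / h(t)) ^ t` has `g = 1 / h` near infinity. -/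
structure HasPowerDecay (χ g : ℝ → ℝ) : Prop where
  antitone : Antitone g
  tendsto_zero : Tendsto g atTop (𝓝 0)
  mem_Icc : ∀ η > 0, ∃ K, ∀ᵐ t ∂volume.restrict (Ioi K),
    χ t ∈ Icc ((exp (-η) * g t) ^ t) ((exp η * g t) ^ t)

theorem hasPowerDecay_zero_of_setIntegral_eq_zero {χ : ℝ → ℝ} {T : ℝ} (hT : 0 ≤ T)
    (hχ : ∀ t, T < t → 0 ≤ χ t) (hint : IntegrableOn χ (Ioi T)) (hzero : ∫ t in Ioi T, χ t = 0) :
    HasPowerDecay χ 0 where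
  antitone := antitone_const
  tendsto_zero := tendsto_const_nhds
  mem_Icc η _ := by
    have hae : χ =ᵐ[volume.restrict (Ioi T)] 0 :=
      (integral_eq_zero_iff_of_nonneg_ae (ae_restrict_of_forall_mem measurableSet_Ioi hχ) hint).1
        hzero
    refine ⟨T, ?_⟩
    filter_upwards [hae, ae_restrict_mem measurableSet_Ioi] with t ht (hTt : T < t)
    simp [ht, zero_rpow (hT.trans_lt hTt).ne']

theorem hasPowerDecay_of_eq_rpow {χ e h : ℝ → ℝ} (he : Tendsto e atTop (𝓝 0)) (hh : Monotone h)
    (hh' : Tendsto h atTop atTop) (hχ : ∀ᶠ t in atTop, χ t = ((1 + e t) / h t) ^ t) :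
    HasPowerDecay χ fun t => (max (h t) 1)⁻¹ where
  antitone := fun s t hst => inv_anti₀ (by positivity) (max_le_max_right 1 (hh hst))
  tendsto_zero := (tendsto_atTop_mono (fun t => le_max_left (h t) 1) hh').inv_tendsto_atTop
  mem_Icc η hη := by
    have hlo : exp (-η) < 1 + 0 := by simpa using hη
    have hhi : 1 + 0 < exp η := by simpa using hη
    have he' := he.const_add 1
    obtain ⟨K, hK⟩ := eventually_atTop.1 <| hχ.and <| (he'.eventually_const_lt hlo).and <|
      (he'.eventually_lt_const hhi).and <| (hh'.eventually_ge_atTop 1).and (eventually_ge_atTop 0)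
    refine ⟨K, ae_restrict_of_forall_mem measurableSet_Ioi fun t ht => ?_⟩
    obtain ⟨hχt, hlo, hhi, hht, ht₀⟩ := hK t (le_of_lt ht)
    rw [max_eq_left hht, hχt, div_eq_mul_inv]
    have hinv : 0 ≤ (h t)⁻¹ := inv_nonneg.2 (zero_le_one.trans hht)
    have hbase : 0 ≤ 1 + e t := (exp_pos (-η)).le.trans hlo.le
    exact ⟨rpow_le_rpow (by positivity) (mul_le_mul_of_nonneg_right hlo.le hinv) ht₀,
      rpow_le_rpow (mul_nonneg hbase hinv) (mul_le_mul_of_nonneg_right hhi.le hinv) ht₀⟩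

namespace HasPowerDecay

variable {χ g : ℝ → ℝ}

theorem nonneg (hg : HasPowerDecay χ g) (t : ℝ) : 0 ≤ g t :=
  hg.antitone.le_of_tendsto hg.tendsto_zero t

theorem integrableOn_Ioi_one (hg : HasPowerDecay χ g) (hχ : IsDelayKernel χ) :
    IntegrableOn χ (Ioi 1) := by
  obtain ⟨K, hK⟩ := hg.mem_Icc 1 one_pos
  obtain ⟨M, hgM, hM₁, hKM⟩ := ((hg.tendsto_zero.eventually_le_const (exp_pos (-2))).and
    ((eventually_ge_atTop 1).and (eventually_ge_atTop K))).exists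
  have hexp : ∀ᵐ t ∂volume.restrict (Ioi M), ‖χ t‖ ≤ exp (-1 * t) := by
    filter_upwards [ae_restrict_of_ae_restrict_of_subset (Ioi_subset_Ioi hKM) hK,
      ae_restrict_mem measurableSet_Ioi] with t ht (hMt : M < t)
    have ht₀ : 0 ≤ t := by linarith
    rw [norm_of_nonneg (hχ.nonneg ht₀), exp_mul]
    refine ht.2.trans (rpow_le_rpow (mul_nonneg (exp_pos _).le (hg.nonneg t)) ?_ ht₀)
    calc exp 1 * g t ≤ exp 1 * exp (-2) := by
          gcongr
          exact (hg.antitone hMt.le).trans hgM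
      _ = exp (-1) := by rw [← exp_add]; norm_num
  rw [← Ioc_union_Ioi_eq_Ioi hM₁]
  refine IntegrableOn.union (by simpa using hχ.integrableOn_mul_exp zero_le_one M 0) ?_
  exact (integrableOn_exp_mul_Ioi (by norm_num) M).mono' hχ.measurable.aestronglyMeasurable hexp

theorem exp_mul_le_setIntegral (hg : HasPowerDecay χ g) (hχ : IsDelayKernel χ) {K X s η : ℝ}
    (hK : ∀ᵐ t ∂volume.restrict (Ioi K), (exp (-η) * g t) ^ t ≤ χ t) (hη : 0 ≤ η)
    (hKX : K + 1 ≤ X) (hX : 2 ≤ X) (hgX : exp (-(s + 2 * η)) ≤ g X) :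
    exp (η * (X - 1)) ≤ ∫ t in Ioc 1 X, χ t * exp ((s + 4 * η) * t) := by
  have hint := hχ.integrableOn_mul_exp zero_le_one X (s + 4 * η)
  have hsub : Ioc (X - 1) X ⊆ Ioc 1 X := Ioc_subset_Ioc_left (by linarith)
  calc exp (η * (X - 1)) = ∫ _ in Ioc (X - 1) X, exp (η * (X - 1)) := by simp
    _ ≤ ∫ t in Ioc (X - 1) X, χ t * exp ((s + 4 * η) * t) := by
        refine integral_mono_ae (integrable_const _) (hint.mono_set hsub) ?_
        filter_upwards [ae_restrict_of_ae_restrict_of_subset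
          (fun t ht => (by linarith [ht.1] : K < t)) hK, ae_restrict_mem measurableSet_Ioc]
          with t hχt ht
        have ht₀ : 0 ≤ t := by linarith [ht.1]
        calc exp (η * (X - 1)) ≤ exp (η * t) := by gcongr; exact ht.1.le
          _ = exp (-η + -(s + 2 * η)) ^ t * exp ((s + 4 * η) * t) := by
              rw [← exp_mul, ← exp_add]; ring_nf
          _ ≤ (exp (-η) * g t) ^ t * exp ((s + 4 * η) * t) := by
              rw [exp_add]
              gcongr
              exact hgX.trans (hg.antitone ht.2)
          _ ≤ χ t * exp ((s + 4 * η) * t) := by gcongr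
    _ ≤ ∫ t in Ioc 1 X, χ t * exp ((s + 4 * η) * t) :=
        setIntegral_mono_set hint (ae_restrict_of_forall_mem measurableSet_Ioc fun t ht =>
          mul_nonneg (hχ.nonneg (zero_le_one.trans ht.1.le)) (exp_pos _).le) hsub.eventuallyLE

theorem setIntegral_Ioi_mul_exp_le (hg : HasPowerDecay χ g) (hχ : ∀ t, 1 < t → 0 ≤ χ t)
    {K X s η : ℝ} (hK : ∀ᵐ t ∂volume.restrict (Ioi K), χ t ≤ (exp η * g t) ^ t) (hη : 0 < η)
    (hKX : K ≤ X) (hX : 1 ≤ X) (hgX : g X ≤ exp (-(s + 2 * η))) :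
    ∫ t in Ioi X, χ t * exp (s * t) ≤ η⁻¹ := by
  have hle : ∀ᵐ t ∂volume.restrict (Ioi X), χ t * exp (s * t) ≤ exp (-η * t) := by
    filter_upwards [ae_restrict_of_ae_restrict_of_subset (Ioi_subset_Ioi hKX) hK,
      ae_restrict_mem measurableSet_Ioi] with t hχt (ht : X < t)
    have ht₀ : 0 ≤ t := by linarith
    have hgt := hg.nonneg t
    calc χ t * exp (s * t) ≤ (exp η * g t) ^ t * exp (s * t) := by gcongr
      _ ≤ exp (η + -(s + 2 * η)) ^ t * exp (s * t) := by
          rw [exp_add]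
          gcongr
          exact (hg.antitone ht.le).trans hgX
      _ = exp (-η * t) := by rw [← exp_mul, ← exp_add]; ring_nf
  calc ∫ t in Ioi X, χ t * exp (s * t) ≤ ∫ t in Ioi X, exp (-η * t) :=
        integral_mono_of_nonneg (ae_restrict_of_forall_mem measurableSet_Ioi fun t ht =>
          mul_nonneg (hχ t (hX.trans_lt ht)) (exp_pos _).le)
          (integrableOn_exp_mul_Ioi (neg_lt_zero.2 hη) X) hle
    _ = exp (-η * X) * η⁻¹ := by
        rw [integral_exp_mul_Ioi (neg_lt_zero.2 hη), neg_div_neg_eq, div_eq_mul_inv]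
    _ ≤ η⁻¹ := mul_le_of_le_one_left (by positivity) (exp_le_one_iff.2 (by nlinarith))

theorem saddleConcentrated {ξ : ℝ → ℝ} (hg : HasPowerDecay χ g) (hχ : IsDelayKernel χ)
    (hξ : IsSaddleFunction χ ξ) : SaddleConcentrated χ ξ := by
  intro δ hδ
  obtain ⟨η, hη, rfl⟩ : ∃ η > 0, δ = 4 * η := ⟨δ / 4, by positivity, by ring⟩
  obtain ⟨K, hK⟩ := hg.mem_Icc η hη
  have hlin : ∀ {c : ℝ}, 0 < c → Tendsto (fun u => c * u) atTop atTop := fun hc =>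
    tendsto_id.const_mul_atTop hc
  have hgrowth : ∀ᶠ u in atTop, u ≤ exp (η * (4 * η * u - 1)) := by
    filter_upwards [(isLittleO_pow_exp_pos_mul_atTop 1 (by positivity : 0 < η * (4 * η))).bound
      (exp_pos (-η)), eventually_ge_atTop 0] with u hu hu₀
    rw [pow_one, norm_of_nonneg hu₀, norm_of_nonneg (exp_pos _).le, ← exp_add] at hu
    exact hu.trans_eq (congrArg exp (by ring))
  have hloss : ∀ᶠ u in atTop, u ≤ exp (4 * η) * (u - η⁻¹) := by
    filter_upwards [(hlin (sub_pos.2 (one_lt_exp_iff.2 hδ))).eventually_ge_atTop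
      (exp (4 * η) * η⁻¹)] with u hu
    linarith
  filter_upwards [hgrowth, hloss, eventually_gt_atTop 1, (hlin hδ).eventually_ge_atTop 2,
    (hlin hδ).eventually_ge_atTop (K + 1)] with u hgrowth hloss hu hX hKX
  rcases le_total (exp (-(ξ u + 2 * η))) (g (4 * η * u)) with hgX | hgX
  · exact hgrowth.trans
      (hg.exp_mul_le_setIntegral hχ (hK.mono fun t ht => ht.1) hη.le hKX hX hgX)
  · have hX₁ : 1 ≤ 4 * η * u := by linarith
    have hint := hξ.integrableOn hu
    have htail := hg.setIntegral_Ioi_mul_exp_le hχ.nonneg_of_one_lt (hK.mono fun t ht => ht.2) hη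
      (by linarith) hX₁ hgX
    have hsplit := setIntegral_union Ioc_disjoint_Ioi_same measurableSet_Ioi
      (hint.mono_set Ioc_subset_Ioi_self) (hint.mono_set (Ioi_subset_Ioi hX₁))
    rw [Ioc_union_Ioi_eq_Ioi hX₁, ← hξ u hu] at hsplit
    have htilt := exp_mul_setIntegral_mul_exp_le measurableSet_Ioc
      (Ioc_subset_Ioi_self.trans Ioi_subset_Ici_self)
      (fun t ht => hχ.nonneg_of_one_lt t ht.1) (le_add_of_nonneg_right hδ.le)
      (hint.mono_set Ioc_subset_Ioi_self)
      (hχ.integrableOn_mul_exp zero_le_one (4 * η * u) (ξ u + 4 * η))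
    rw [add_sub_cancel_left, mul_one] at htilt
    refine (hloss.trans ?_).trans htilt
    gcongr
    linarith

end HasPowerDecay

theorem statement6_general {χ σ ξ : ℝ → ℝ} (hχ : IsDelayKernel χ)
    (hχ₁ : ∀ t ∈ Icc (0 : ℝ) 1, χ t = 1) (hint : IntegrableOn χ (Ioi 1))
    (hσ : IsDelaySolution χ σ) (hξ : IsSaddleFunction χ ξ) (hconc : SaddleConcentrated χ ξ) :
    Tendsto (fun u => (log (σ u) + saddleExponent χ ξ u) / u) atTop (𝓝 0) :=
  IsLittleO.tendsto_div_nhds_zero <| isLittleO_id_of_forall_le_add_mul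
    (fun _ hδ => hσ.eventually_log_add_saddleExponent_le hχ hχ₁ hint hξ hδ)
    fun _ hδ => hσ.eventually_le_log_add_saddleExponent hχ hχ₁ hint hξ hconc hδ

theorem statement6 (χ : ℝ → ℝ) (hmeas : Measurable χ)
    (hχ1 : ∀ t : ℝ, 0 ≤ t → t ≤ 1 → χ t = 1)
    (hχ2 : ∀ t : ℝ, 1 < t → 0 ≤ χ t ∧ χ t ≤ 1)
    (hcase :
      -- case (i): χ vanishes beyond a minimal T > 1
      (∃ T : ℝ, 1 < T ∧ (∫ t in Set.Ioi T, χ t) = 0 ∧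
        ∀ T' : ℝ, (∫ t in Set.Ioi T', χ t) = 0 → T ≤ T') ∨
      -- case (ii): χ(t) = ((1 + o(1))/h(t))^t with h nondecreasing, h → ∞
      (∃ e : ℝ → ℝ, Filter.Tendsto e Filter.atTop (nhds 0) ∧
        ∃ h : ℝ → ℝ, Monotone h ∧ Filter.Tendsto h Filter.atTop Filter.atTop ∧
          ∀ t : ℝ, 1 ≤ t → χ t = ((1 + e t) / h t) ^ t))
    (σ : ℝ → ℝ)
    (hσ1 : ∀ u : ℝ, 0 ≤ u → u ≤ 1 → σ u = 1)
    (hσeq : ∀ u : ℝ, 1 < u → u * σ u = ∫ t in (0 : ℝ)..u, σ (u - t) * χ t)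
    (ξ : ℝ → ℝ)
    (hξ : ∀ u : ℝ, 1 < u → u = ∫ v in Set.Ioi (1 : ℝ), χ v * Real.exp (ξ u * v)) :
    Filter.Tendsto (fun u : ℝ =>
        (Real.log (σ u) + ξ u * u -
          ∫ v in Set.Ioi (1 : ℝ), χ v * Real.exp (ξ u * v) / v) / u)
      Filter.atTop (nhds 0) := by
  have hχ : IsDelayKernel χ := ⟨hmeas, fun t ht => (le_or_gt t 1).elim
    (fun h => by rw [hχ1 t ht h]; exact right_mem_Icc.2 zero_le_one) (hχ2 t)⟩
  obtain ⟨g, hg⟩ : ∃ g, HasPowerDecay χ g := by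
    rcases hcase with ⟨T, hT, hzero, hmin⟩ | ⟨e, he, h, hmono, hlim, hχe⟩
    · have hint : IntegrableOn χ (Ioi 1) := by
        by_contra hnot
        exact hT.not_ge (hmin 1 (integral_undef hnot))
      exact ⟨0, hasPowerDecay_zero_of_setIntegral_eq_zero (by linarith)
        (fun t ht => (hχ2 t (hT.trans ht)).1) (hint.mono_set (Ioi_subset_Ioi hT.le)) hzero⟩
    · exact ⟨_, hasPowerDecay_of_eq_rpow he hmono hlim ((eventually_ge_atTop 1).mono hχe)⟩
  have hconc : SaddleConcentrated χ ξ := hg.saddleConcentrated hχ hξ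
  simpa only [saddleExponent, add_sub_assoc] using statement6_general hχ
    (fun t ht => hχ1 t ht.1 ht.2) (hg.integrableOn_Ioi_one hχ) ⟨hσ1, hσeq⟩ hξ hconc
end

section
/- For each integer k ≥ 0 there exists a constant C_k > 0 such that for all reals x ≥ 2 and 2 ≤ y ≤ x, the number of positive integers n ≤ x for which there exists a prime p > y with p² | φ_k(n) is at most C_k · x·(log x)^{2k}/y. -/
/-!
Let `H = 1 + 1/2 + ⋯ + 1/N`, let `p` and `q` be primes, and write `φ_k` for the `k`-th iterate of
`φ`. If `p ∣ φ(m)`, then `p² ∣ m` or some prime `r ≡ 1 (mod p)` divides `m`, and the reciprocals of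
the primes `r ≤ N` with `r ≡ 1 (mod p)` sum to at most `H / p`. Hence passing from `φ_k` to
`φ_{k+1}` costs a factor `1 + H`, and `p ∣ φ_k(n)` for at most `N (1 + H)^k / p` of the `n ≤ N`.
In the same way, if `p q ∣ φ(m)` with `q ≤ p`, then `m` is divisible by `p²`, by `r q`, by a prime
`≡ 1 (mod p q)`, or by `r s`, for primes `r ≡ 1 (mod p)` and `s ≡ 1 (mod q)`. The cost of a step is
now `1 + H + H + H² = (1 + H)²`, so `p q ∣ φ_k(n)` for at most `N (1 + H)^(2k) / (p q)` of the
`n ≤ N`. Finally take `q = p` and sum over `p > y`.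
-/

section DvdTotient

variable {p q m : ℕ}

theorem mul_self_dvd_or_exists_prime_of_dvd_totient (hp : p.Prime) (h : p ∣ m.totient) :
    p * p ∣ m ∨ ∃ r, r.Prime ∧ p ∣ r - 1 ∧ r ∣ m := by
  induction m using induction_on_primes with
  | zero => exact Or.inl (dvd_zero _)
  | one => exact absurd (Nat.totient_one ▸ h) hp.not_dvd_one
  | prime_mul r t hr ih =>
    have of_dvd_totient (ht : p ∣ t.totient) :
        p * p ∣ r * t ∨ ∃ s, s.Prime ∧ p ∣ s - 1 ∧ s ∣ r * t :=
      (ih ht).imp (·.mul_left r) fun ⟨s, hs, hps, hst⟩ => ⟨s, hs, hps, hst.mul_left r⟩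
    by_cases hrt : r ∣ t
    · rw [Nat.totient_mul_of_prime_of_dvd hr hrt, hp.dvd_mul] at h
      refine h.elim (fun hpr => Or.inl ?_) of_dvd_totient
      obtain rfl := (Nat.prime_dvd_prime_iff_eq hp hr).1 hpr
      exact mul_dvd_mul_left p hrt
    · rw [Nat.totient_mul_of_prime_of_not_dvd hr hrt, hp.dvd_mul] at h
      exact h.elim (fun hpr => Or.inr ⟨r, hr, hpr, dvd_mul_right r t⟩) of_dvd_totient

theorem dvd_or_exists_prime_of_mul_dvd_totient (hp : p.Prime) (hq : q.Prime)
    (h : p * q ∣ m.totient) :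
    p * p ∣ m ∨ (∃ r, r.Prime ∧ p ∣ r - 1 ∧ r * q ∣ m) ∨
      (∃ r, r.Prime ∧ p * q ∣ r - 1 ∧ r ∣ m) ∨
      ∃ r s, r.Prime ∧ s.Prime ∧ p ∣ r - 1 ∧ q ∣ s - 1 ∧ r * s ∣ m := by
  obtain hpm | ⟨r, hr, hpr, t, rfl⟩ :=
    mul_self_dvd_or_exists_prime_of_dvd_totient hp (dvd_of_mul_right_dvd h)
  · exact Or.inl hpm
  by_cases hpqr : p * q ∣ r - 1
  · exact Or.inr (Or.inr (Or.inl ⟨r, hr, hpqr, dvd_mul_right r t⟩))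
  have hq_dvd : q ∣ t ∨ q ∣ t.totient := by
    by_cases hrt : r ∣ t
    · rw [Nat.totient_mul_of_prime_of_dvd hr hrt] at h
      refine (hq.dvd_mul.1 (dvd_of_mul_left_dvd h)).imp_left fun hqr => ?_
      exact (Nat.prime_dvd_prime_iff_eq hq hr).1 hqr ▸ hrt
    · obtain ⟨c, hc⟩ := hpr
      rw [Nat.totient_mul_of_prime_of_not_dvd hr hrt, hc, mul_assoc,
        Nat.mul_dvd_mul_iff_left hp.pos, hq.dvd_mul] at h
      exact h.imp_left fun hqc => absurd (hc ▸ mul_dvd_mul_left p hqc) hpqr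
  have hq_dvd_or : q ∣ t ∨ ∃ s, s.Prime ∧ q ∣ s - 1 ∧ s ∣ t :=
    hq_dvd.elim Or.inl fun ht =>
      (mul_self_dvd_or_exists_prime_of_dvd_totient hq ht).imp_left dvd_of_mul_right_dvd
  obtain hqt | ⟨s, hs, hqs, hst⟩ := hq_dvd_or
  · exact Or.inr (Or.inl ⟨r, hr, hpr, mul_dvd_mul_left r hqt⟩)
  · exact Or.inr (Or.inr (Or.inr ⟨r, s, hr, hs, hpr, hqs, mul_dvd_mul_left r hst⟩))

end DvdTotient

theorem iterate_totient_pos {n : ℕ} (hn : 0 < n) (k : ℕ) : 0 < Nat.totient^[k] n :=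
  Function.Iterate.rec (0 < ·) hn (fun _ => Nat.totient_pos.2) k

theorem iterate_totient_le (n k : ℕ) : Nat.totient^[k] n ≤ n :=
  Function.Iterate.rec (· ≤ n) le_rfl (fun m hm => (Nat.totient_le m).trans hm) k

theorem le_of_dvd_iterate_totient {d n k : ℕ} (hn : 0 < n) (h : d ∣ Nat.totient^[k] n) : d ≤ n :=
  (Nat.le_of_dvd (iterate_totient_pos hn k) h).trans (iterate_totient_le n k)

/-- The primes `r ≤ N` with `r ≡ 1 (mod d)`, through which `d` divides the totient of a multiple of
`r`. As `r` is positive, the congruence is expressed by `d ∣ r - 1` with truncated subtraction. -/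
def primesOneMod (N d : ℕ) : Finset ℕ := {r ∈ Finset.Ioc 1 N | r.Prime ∧ d ∣ r - 1}

theorem mem_primesOneMod {N d r : ℕ} : r ∈ primesOneMod N d ↔ r ≤ N ∧ r.Prime ∧ d ∣ r - 1 := by
  simp only [primesOneMod, Finset.mem_filter, Finset.mem_Ioc, and_assoc]
  exact ⟨And.right, fun h => ⟨h.2.1.one_lt, h⟩⟩

theorem prime_of_mem_primesOneMod {N d r : ℕ} (hr : r ∈ primesOneMod N d) : r.Prime :=
  (mem_primesOneMod.1 hr).2.1

theorem harmonic_cast_nonneg (N : ℕ) : (0 : ℝ) ≤ harmonic N := by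
  exact_mod_cast Finset.sum_nonneg fun i _ => by positivity

theorem sum_inv_dvd_sub_one_le (N : ℕ) {d : ℕ} (hd : 0 < d) :
    ∑ r ∈ Finset.Ioc 1 N with d ∣ r - 1, (r : ℝ)⁻¹ ≤ harmonic N * (d : ℝ)⁻¹ := by
  have hsub : {r ∈ Finset.Ioc 1 N | d ∣ r - 1} ⊆ (Finset.Icc 1 N).image (· * d + 1) := by
    intro r hr
    simp only [Finset.mem_filter, Finset.mem_Ioc, Finset.mem_image, Finset.mem_Icc] at hr ⊢
    obtain ⟨⟨hr_one, hrN⟩, hdvd⟩ := hr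
    have hr_eq : (r - 1) / d * d + 1 = r := by rw [Nat.div_mul_cancel hdvd]; omega
    refine ⟨(r - 1) / d, ⟨?_, ?_⟩, hr_eq⟩
    · exact Nat.div_pos (Nat.le_of_dvd (by omega) hdvd) hd
    · exact (Nat.div_le_self _ _).trans (by omega)
  have hinj : Set.InjOn (· * d + 1) (Finset.Icc 1 N) := fun i _ j _ hij =>
    Nat.eq_of_mul_eq_mul_right hd (Nat.succ_injective hij)
  calc ∑ r ∈ Finset.Ioc 1 N with d ∣ r - 1, (r : ℝ)⁻¹
      ≤ ∑ r ∈ (Finset.Icc 1 N).image (· * d + 1), (r : ℝ)⁻¹ :=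
        Finset.sum_le_sum_of_subset_of_nonneg hsub fun _ _ _ => by positivity
    _ = ∑ j ∈ Finset.Icc 1 N, ((j * d + 1 : ℕ) : ℝ)⁻¹ := Finset.sum_image hinj
    _ ≤ ∑ j ∈ Finset.Icc 1 N, (j : ℝ)⁻¹ * (d : ℝ)⁻¹ := by
        refine Finset.sum_le_sum fun j hj => ?_
        have hj_pos : 0 < j := (Finset.mem_Icc.1 hj).1
        rw [← mul_inv, ← Nat.cast_mul]
        gcongr
        exact Nat.le_succ _
    _ = harmonic N * (d : ℝ)⁻¹ := by
        rw [← Finset.sum_mul, harmonic_eq_sum_Icc]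
        push_cast
        rfl

theorem sum_inv_primesOneMod_le (N : ℕ) {d : ℕ} (hd : 0 < d) :
    ∑ r ∈ primesOneMod N d, (r : ℝ)⁻¹ ≤ harmonic N * (d : ℝ)⁻¹ := by
  refine le_trans ?_ (sum_inv_dvd_sub_one_le N hd)
  exact Finset.sum_le_sum_of_subset_of_nonneg
    (Finset.monotone_filter_right _ fun _ _ => And.right) fun _ _ _ => by positivity

theorem card_biUnion_le_mul_sum {ι α : Type*} [DecidableEq α] {s : Finset ι} {f : ι → Finset α}
    {w : ι → ℝ} {c : ℝ} (h : ∀ i ∈ s, ((f i).card : ℝ) ≤ c * w i) :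
    ((s.biUnion f).card : ℝ) ≤ c * ∑ i ∈ s, w i :=
  calc ((s.biUnion f).card : ℝ) ≤ ∑ i ∈ s, ((f i).card : ℝ) := mod_cast Finset.card_biUnion_le
    _ ≤ ∑ i ∈ s, c * w i := Finset.sum_le_sum h
    _ = c * ∑ i ∈ s, w i := (Finset.mul_sum ..).symm

/-- The positive integers `n ≤ N` for which `d` divides `φ_k(n)`, the `k`-th iterate of the totient;
their number is bounded by induction on `k`, for `d` a prime or a product of two primes. -/
def iterTotientMultiples (N k d : ℕ) : Finset ℕ := {n ∈ Finset.Ioc 0 N | d ∣ Nat.totient^[k] n}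

theorem mem_iterTotientMultiples {N k d n : ℕ} :
    n ∈ iterTotientMultiples N k d ↔ (0 < n ∧ n ≤ N) ∧ d ∣ Nat.totient^[k] n := by
  rw [iterTotientMultiples, Finset.mem_filter, Finset.mem_Ioc]

section Count

variable (N k : ℕ) {p q : ℕ}

theorem card_iterTotientMultiples_zero_le (d : ℕ) :
    ((iterTotientMultiples N 0 d).card : ℝ) ≤ N * (d : ℝ)⁻¹ := by
  rw [← div_eq_mul_inv]
  exact (congrArg Nat.cast (Nat.Ioc_filter_dvd_card_eq_div N d)).trans_le Nat.cast_div_le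

theorem iterTotientMultiples_succ_subset (hp : p.Prime) :
    iterTotientMultiples N (k + 1) p ⊆
      iterTotientMultiples N k p ∪ (primesOneMod N p).biUnion (iterTotientMultiples N k) := by
  intro n hn
  simp only [Finset.mem_union, Finset.mem_biUnion, mem_iterTotientMultiples,
    mem_primesOneMod, Function.iterate_succ_apply'] at hn ⊢
  obtain ⟨⟨hn_pos, hnN⟩, hdvd⟩ := hn
  obtain h | ⟨r, hr, hpr, h⟩ := mul_self_dvd_or_exists_prime_of_dvd_totient hp hdvd
  · exact Or.inl ⟨⟨hn_pos, hnN⟩, dvd_of_mul_right_dvd h⟩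
  · exact Or.inr
      ⟨r, ⟨(le_of_dvd_iterate_totient hn_pos h).trans hnN, hr, hpr⟩, ⟨hn_pos, hnN⟩, h⟩

theorem iterTotientMultiples_succ_mul_subset (hp : p.Prime) (hq : q.Prime) :
    iterTotientMultiples N (k + 1) (p * q) ⊆
      iterTotientMultiples N k (p * p) ∪
      ((primesOneMod N p).biUnion fun r => iterTotientMultiples N k (r * q)) ∪
      (primesOneMod N (p * q)).biUnion (iterTotientMultiples N k) ∪
      (primesOneMod N p ×ˢ primesOneMod N q).biUnion
        fun rs => iterTotientMultiples N k (rs.1 * rs.2) := by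
  intro n hn
  simp only [Finset.mem_union, Finset.mem_biUnion, Finset.mem_product, Prod.exists,
    mem_iterTotientMultiples, mem_primesOneMod, Function.iterate_succ_apply', or_assoc] at hn ⊢
  obtain ⟨⟨hn_pos, hnN⟩, hdvd⟩ := hn
  have le_N {d : ℕ} (hd : d ∣ Nat.totient^[k] n) : d ≤ N :=
    (le_of_dvd_iterate_totient hn_pos hd).trans hnN
  obtain h | ⟨r, hr, hpr, h⟩ | ⟨r, hr, hpqr, h⟩ | ⟨r, s, hr, hs, hpr, hqs, h⟩ :=
    dvd_or_exists_prime_of_mul_dvd_totient hp hq hdvd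
  · exact Or.inl ⟨⟨hn_pos, hnN⟩, h⟩
  · exact Or.inr (Or.inl ⟨r, ⟨le_N (dvd_of_mul_right_dvd h), hr, hpr⟩, ⟨hn_pos, hnN⟩, h⟩)
  · exact Or.inr (Or.inr (Or.inl ⟨r, ⟨le_N h, hr, hpqr⟩, ⟨hn_pos, hnN⟩, h⟩))
  · exact Or.inr (Or.inr (Or.inr ⟨r, s, ⟨⟨le_N (dvd_of_mul_right_dvd h), hr, hpr⟩,
      ⟨le_N (dvd_of_mul_left_dvd h), hs, hqs⟩⟩, ⟨hn_pos, hnN⟩, h⟩))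

theorem card_iterTotientMultiples_prime_le (hp : p.Prime) :
    ((iterTotientMultiples N k p).card : ℝ) ≤ N * (1 + harmonic N) ^ k * (p : ℝ)⁻¹ := by
  induction k generalizing p with
  | zero => simpa only [pow_zero, mul_one] using card_iterTotientMultiples_zero_le N p
  | succ k ih =>
    have hH := harmonic_cast_nonneg N
    set H : ℝ := (harmonic N : ℝ)
    calc ((iterTotientMultiples N (k + 1) p).card : ℝ)
        ≤ (iterTotientMultiples N k p).card +
            ((primesOneMod N p).biUnion (iterTotientMultiples N k)).card :=
          mod_cast (Finset.card_le_card (iterTotientMultiples_succ_subset N k hp)).trans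
            (Finset.card_union_le _ _)
      _ ≤ N * (1 + H) ^ k * (p : ℝ)⁻¹ + N * (1 + H) ^ k * ∑ r ∈ primesOneMod N p, (r : ℝ)⁻¹ :=
          add_le_add (ih hp)
            (card_biUnion_le_mul_sum fun r hr => ih (prime_of_mem_primesOneMod hr))
      _ ≤ N * (1 + H) ^ k * (p : ℝ)⁻¹ + N * (1 + H) ^ k * (H * (p : ℝ)⁻¹) := by
          gcongr
          exact sum_inv_primesOneMod_le N hp.pos
      _ = N * (1 + H) ^ (k + 1) * (p : ℝ)⁻¹ := by ring

theorem card_iterTotientMultiples_succ_mul_le {c : ℝ} (hc : 0 ≤ c)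
    (hone : ∀ {r : ℕ}, r.Prime → ((iterTotientMultiples N k r).card : ℝ) ≤ c * (r : ℝ)⁻¹)
    (htwo : ∀ {r s : ℕ}, r.Prime → s.Prime →
      ((iterTotientMultiples N k (r * s)).card : ℝ) ≤ c * ((r : ℝ)⁻¹ * (s : ℝ)⁻¹))
    (hp : p.Prime) (hq : q.Prime) (hqp : q ≤ p) :
    ((iterTotientMultiples N (k + 1) (p * q)).card : ℝ) ≤
      c * (1 + harmonic N) ^ 2 * ((p : ℝ)⁻¹ * (q : ℝ)⁻¹) := by
  have hH := harmonic_cast_nonneg N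
  have hq_pos : (0 : ℝ) < q := mod_cast hq.pos
  have hsum_p := sum_inv_primesOneMod_le N hp.pos
  have hsum_q := sum_inv_primesOneMod_le N hq.pos
  have hsum_pq := sum_inv_primesOneMod_le N (Nat.mul_pos hp.pos hq.pos)
  set H : ℝ := (harmonic N : ℝ)
  calc ((iterTotientMultiples N (k + 1) (p * q)).card : ℝ)
      ≤ (iterTotientMultiples N k (p * p)).card +
          ((primesOneMod N p).biUnion fun r => iterTotientMultiples N k (r * q)).card +
          ((primesOneMod N (p * q)).biUnion (iterTotientMultiples N k)).card +
          ((primesOneMod N p ×ˢ primesOneMod N q).biUnion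
            fun rs => iterTotientMultiples N k (rs.1 * rs.2)).card := by
        norm_cast
        refine (Finset.card_le_card (iterTotientMultiples_succ_mul_subset N k hp hq)).trans ?_
        grw [Finset.card_union_le, Finset.card_union_le, Finset.card_union_le]
    _ ≤ c * ((p : ℝ)⁻¹ * (p : ℝ)⁻¹) +
          c * ∑ r ∈ primesOneMod N p, (r : ℝ)⁻¹ * (q : ℝ)⁻¹ +
          c * ∑ r ∈ primesOneMod N (p * q), (r : ℝ)⁻¹ +
          c * ∑ rs ∈ primesOneMod N p ×ˢ primesOneMod N q, (rs.1 : ℝ)⁻¹ * (rs.2 : ℝ)⁻¹ := by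
        gcongr
        · exact htwo hp hp
        · exact card_biUnion_le_mul_sum fun r hr => htwo (prime_of_mem_primesOneMod hr) hq
        · exact card_biUnion_le_mul_sum fun r hr => hone (prime_of_mem_primesOneMod hr)
        · exact card_biUnion_le_mul_sum fun rs hrs => (Finset.mem_product.1 hrs).elim
            fun hr hs => htwo (prime_of_mem_primesOneMod hr) (prime_of_mem_primesOneMod hs)
    _ ≤ c * ((p : ℝ)⁻¹ * (q : ℝ)⁻¹) + c * (H * (p : ℝ)⁻¹ * (q : ℝ)⁻¹) +
          c * (H * ((p * q : ℕ) : ℝ)⁻¹) + c * (H * (p : ℝ)⁻¹ * (H * (q : ℝ)⁻¹)) := by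
        rw [← Finset.sum_mul, Finset.sum_product' (f := fun r s : ℕ => (r : ℝ)⁻¹ * (s : ℝ)⁻¹),
          ← Finset.sum_mul_sum]
        gcongr
    _ = c * (1 + H) ^ 2 * ((p : ℝ)⁻¹ * (q : ℝ)⁻¹) := by
        push_cast
        rw [mul_inv]
        ring

theorem card_iterTotientMultiples_mul_le (hp : p.Prime) (hq : q.Prime) :
    ((iterTotientMultiples N k (p * q)).card : ℝ) ≤
      N * (1 + harmonic N) ^ (2 * k) * ((p : ℝ)⁻¹ * (q : ℝ)⁻¹) := by
  induction k generalizing p q with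
  | zero =>
    simpa only [mul_zero, pow_zero, mul_one, Nat.cast_mul, mul_inv] using
      card_iterTotientMultiples_zero_le N (p * q)
  | succ k ih =>
    wlog hqp : q ≤ p generalizing p q
    · rw [mul_comm p q, mul_comm (p : ℝ)⁻¹]
      exact this hq hp (le_of_not_ge hqp)
    have hH := harmonic_cast_nonneg N
    have card_prime_le {r : ℕ} (hr : r.Prime) : ((iterTotientMultiples N k r).card : ℝ) ≤
        N * (1 + harmonic N) ^ (2 * k) * (r : ℝ)⁻¹ := by
      refine (card_iterTotientMultiples_prime_le N k hr).trans ?_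
      gcongr
      · linarith
      · omega
    rw [mul_add_one, pow_add, ← mul_assoc (N : ℝ)]
    exact card_iterTotientMultiples_succ_mul_le N k (by positivity) card_prime_le ih hp hq hqp

theorem ncard_exists_prime_sq_dvd_iterate_totient_le (K : ℕ) :
    ({n : ℕ | 0 < n ∧ n ≤ N ∧ ∃ p : ℕ, p.Prime ∧ K < p ∧ p ^ 2 ∣ Nat.totient^[k] n}.ncard : ℝ) ≤
      N * (1 + harmonic N) ^ (2 * k) * (2 / (K + 1)) := by
  set P : Finset ℕ := {p ∈ Finset.Ioo K (N + 1) | p.Prime}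
  have hH := harmonic_cast_nonneg N
  have hsub : {n : ℕ | 0 < n ∧ n ≤ N ∧ ∃ p : ℕ, p.Prime ∧ K < p ∧ p ^ 2 ∣ Nat.totient^[k] n} ⊆
      (P.biUnion fun p => iterTotientMultiples N k (p * p) : Finset ℕ) := by
    rintro n ⟨hn, hnN, p, hp, hKp, hdvd⟩
    have hpN : p ≤ N :=
      (le_of_dvd_iterate_totient hn (dvd_of_mul_right_dvd (sq p ▸ hdvd))).trans hnN
    simp only [P, Finset.mem_coe, Finset.mem_biUnion, Finset.mem_filter, Finset.mem_Ioo,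
      mem_iterTotientMultiples]
    exact ⟨p, ⟨⟨hKp, Nat.lt_succ_of_le hpN⟩, hp⟩, ⟨hn, hnN⟩, sq p ▸ hdvd⟩
  have hsum : ∑ p ∈ P, ((p : ℝ)⁻¹ * (p : ℝ)⁻¹) ≤ 2 / (K + 1) := by
    simp only [← sq, inv_pow]
    exact (Finset.sum_le_sum_of_subset_of_nonneg (Finset.filter_subset _ _)
      fun _ _ _ => by positivity).trans (sum_Ioo_inv_sq_le K (N + 1))
  calc _ ≤ ((P.biUnion fun p => iterTotientMultiples N k (p * p)).card : ℝ) := by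
        rw [← Set.ncard_coe_finset]
        exact mod_cast Set.ncard_le_ncard hsub (Finset.finite_toSet _)
    _ ≤ N * (1 + harmonic N) ^ (2 * k) * ∑ p ∈ P, ((p : ℝ)⁻¹ * (p : ℝ)⁻¹) :=
        card_biUnion_le_mul_sum fun p hp =>
          have hp_prime := (Finset.mem_filter.1 hp).2
          card_iterTotientMultiples_mul_le N k hp_prime hp_prime
    _ ≤ _ := by gcongr

end Count

theorem one_add_harmonic_floor_le {x : ℝ} (hx : 2 ≤ x) :
    1 + (harmonic ⌊x⌋₊ : ℝ) ≤ 4 * Real.log x := by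
  have hlog : Real.log 2 ≤ Real.log x := Real.log_le_log two_pos hx
  have hH : (harmonic ⌊x⌋₊ : ℝ) ≤ 1 + Real.log x := harmonic_floor_le_one_add_log x (by linarith)
  linarith [Real.log_two_gt_d9]

theorem statement15_general (k : ℕ) {x y : ℝ} (hx : 2 ≤ x) (hy : 0 < y) :
    ({n : ℕ | 0 < n ∧ (n : ℝ) ≤ x ∧
        ∃ p : ℕ, p.Prime ∧ y < (p : ℝ) ∧ p ^ 2 ∣ Nat.totient^[k] n}.ncard : ℝ) ≤
      2 * 16 ^ k * x * (Real.log x) ^ (2 * k) / y := by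
  have hx_nonneg : 0 ≤ x := by linarith
  have hH := harmonic_cast_nonneg ⌊x⌋₊
  simp only [← Nat.le_floor_iff hx_nonneg, ← Nat.floor_lt hy.le]
  calc _ ≤ ⌊x⌋₊ * (1 + (harmonic ⌊x⌋₊ : ℝ)) ^ (2 * k) * (2 / (⌊y⌋₊ + 1)) :=
        ncard_exists_prime_sq_dvd_iterate_totient_le ⌊x⌋₊ k ⌊y⌋₊
    _ ≤ x * (4 * Real.log x) ^ (2 * k) * (2 / y) := by
        have hlog : 0 ≤ Real.log x := Real.log_nonneg (by linarith)
        gcongr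
        · exact Nat.floor_le hx_nonneg
        · exact one_add_harmonic_floor_le hx
        · exact (Nat.lt_floor_add_one y).le
    _ = 2 * 16 ^ k * x * Real.log x ^ (2 * k) / y := by
        rw [mul_pow, pow_mul 4]
        ring

theorem statement15 (k : ℕ) :
    ∃ C : ℝ, 0 < C ∧ ∀ x y : ℝ, 2 ≤ x → 2 ≤ y → y ≤ x →
      ({n : ℕ | 0 < n ∧ (n : ℝ) ≤ x ∧
          ∃ p : ℕ, p.Prime ∧ y < (p : ℝ) ∧ p ^ 2 ∣ Nat.totient^[k] n}.ncard : ℝ) ≤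
        C * x * (Real.log x) ^ (2 * k) / y :=
  ⟨2 * 16 ^ k, by positivity, fun _ _ hx hy _ => statement15_general k hx (two_pos.trans_le hy)⟩
end
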